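/- Let p, q, β ∈ (1,∞). Then there exists a constant C, independent of β and F, such that ‖S_β(F)‖_{L^p(R^n)} ≤ C β^{n(1/min{p,q} − 1/q)} ‖S(F)‖_{L^p(R^n)} for all measurable F on R^n × (0,∞), where S_β(F)(x) := (∫_0^1 (1/|B(x,βt)|)∫_{B(x,βt)} |F(y,t)|^q dy dt/t)^{1/q} and S := S_1. -/

import Mathlib

open MeasureTheory Metric
open scoped ENNReal

/-- The Lusin-area functional with aperture `β`:
`S_β(F)(x) = (∫_0^1 ⨍_{B(x,βt)} F(y,t)^q dy dt/t)^{1/q}`. -/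
noncomputable def SFn (n : ℕ) (q β : ℝ)
    (F : EuclideanSpace ℝ (Fin n) → ℝ → ℝ≥0∞) (x : EuclideanSpace ℝ (Fin n)) : ℝ≥0∞ :=
  (∫⁻ t in Set.Ioo (0:ℝ) 1,
      (⨍⁻ y in ball x (β * t), F y t ^ q ∂volume) * ENNReal.ofReal t⁻¹) ^ (1 / q)

/-- The `L^p` "norm" of an `ℝ≥0∞`-valued function. -/
noncomputable def Np (n : ℕ) (p : ℝ) (h : EuclideanSpace ℝ (Fin n) → ℝ≥0∞) : ℝ≥0∞ :=
  (∫⁻ x, h x ^ p ∂volume) ^ (1 / p)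

/-!
After raising everything to the power `q`, let `A_β` be the cone integral of aperture `β` and
`r = p / q`; the claim becomes `∫ A_β ^ r ≤ K β ^ (n (1 - r)⁺) ∫ A_1 ^ r`. By Fubini the averages
over balls can be moved from the integrand of `A_β` onto a test function, so `∫ A_β g ≤ ∫ A_1 h`
as soon as the averages of `g` over `B(y, βt)` are dominated by those of `h` over `B(y, t)`.

* If `r > 1`, take `h = M g` with `M` the maximal function, and conclude by duality and the
  boundedness of `M` on the dual Lebesgue space.
* If `r = 1`, take `g = h = 1`.
* If `r < 1`, let `O = {A_1 > λ}`, let `N` be the halo of `O`, that is, the set where the maximal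
  function of the indicator of `O` exceeds `(2 β ^ n)⁻¹`, and take `g` and `h / 2` to be the
  indicators of the complements of `N` and `O`. Since the measure of `N` is at most a multiple of
  `β ^ n` times that of `O`, this bounds the distribution function of `β ^ n A_β`, and integrating
  in `λ` gives the factor `β ^ (n (1 - r))`.
-/

section RealVariable

open Set

variable {α : Type*} [MeasurableSpace α] {μ : Measure α}

lemma lintegral_mul_setLIntegral_swap {β : Type*} [MeasurableSpace β] {ν : Measure β}
    [SFinite μ] [SFinite ν] {S : Set (α × β)} (hS : MeasurableSet S) {f : α → ℝ≥0∞}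
    {g : β → ℝ≥0∞} (hf : Measurable f) (hg : Measurable g) :
    ∫⁻ a, f a * ∫⁻ b in {b | (a, b) ∈ S}, g b ∂ν ∂μ =
      ∫⁻ b, (∫⁻ a in {a | (a, b) ∈ S}, f a ∂μ) * g b ∂ν := by
  have hmeas : Measurable (S.indicator fun z => f z.1 * g z.2) :=
    ((hf.comp measurable_fst).mul (hg.comp measurable_snd)).indicator hS
  calc ∫⁻ a, f a * ∫⁻ b in {b | (a, b) ∈ S}, g b ∂ν ∂μ
      = ∫⁻ a, ∫⁻ b, S.indicator (fun z => f z.1 * g z.2) (a, b) ∂ν ∂μ := by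
        refine lintegral_congr fun a => ?_
        rw [← lintegral_const_mul _ hg]
        exact (lintegral_indicator (measurable_prodMk_left hS) fun b => f a * g b).symm
    _ = ∫⁻ b, ∫⁻ a, S.indicator (fun z => f z.1 * g z.2) (a, b) ∂μ ∂ν :=
        lintegral_lintegral_swap hmeas.aemeasurable
    _ = ∫⁻ b, (∫⁻ a in {a | (a, b) ∈ S}, f a ∂μ) * g b ∂ν := by
        refine lintegral_congr fun b => ?_
        rw [← lintegral_mul_const _ hf]
        exact lintegral_indicator (measurable_prodMk_right hS) fun a => f a * g b

lemma setLIntegral_Ioo_mul_rpow_sub_one {p a : ℝ} (hp : 0 < p) (ha : 0 ≤ a) :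
    ∫⁻ t in Ioo 0 a, ENNReal.ofReal (p * t ^ (p - 1)) = ENNReal.ofReal a ^ p := by
  have hint : IntervalIntegrable (fun t : ℝ => p * t ^ (p - 1)) volume 0 a :=
    (intervalIntegral.intervalIntegrable_rpow' (by linarith)).const_mul p
  rw [setLIntegral_congr Ioo_ae_eq_Ioc, ← ofReal_integral_eq_lintegral_ofReal
      ((intervalIntegrable_iff_integrableOn_Ioc_of_le ha).1 hint)]
  · rw [← intervalIntegral.integral_of_le ha, intervalIntegral.integral_const_mul,
      integral_rpow (Or.inl (by linarith)), ENNReal.ofReal_rpow_of_nonneg ha hp.le]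
    congr 1
    rw [sub_add_cancel, Real.zero_rpow hp.ne']
    field_simp
    ring
  · filter_upwards [ae_restrict_mem measurableSet_Ioc] with t ht
    have := ht.1
    positivity

lemma setLIntegral_ofReal_lt_mul_rpow_sub_one {p : ℝ} (hp : 0 < p) (v : ℝ≥0∞) :
    ∫⁻ t in {t : ℝ | ENNReal.ofReal t < v}, ENNReal.ofReal (p * t ^ (p - 1))
      ∂(volume.restrict (Ioi 0)) = v ^ p := by
  have hset (a : ℝ) : {t : ℝ | ENNReal.ofReal t < ENNReal.ofReal a} ∩ Ioi 0 = Ioo 0 a := by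
    ext t
    simp only [mem_inter_iff, mem_ofPred_eq, mem_Ioi, mem_Ioo]
    rw [and_comm, and_congr_right fun ht => ENNReal.ofReal_lt_ofReal_iff_of_nonneg ht.le]
  have hmeas (v : ℝ≥0∞) : MeasurableSet {t : ℝ | ENNReal.ofReal t < v} :=
    measurableSet_lt (by fun_prop) measurable_const
  have hfin (a : ℝ) (ha : 0 ≤ a) :
      ∫⁻ t in {t : ℝ | ENNReal.ofReal t < ENNReal.ofReal a}, ENNReal.ofReal (p * t ^ (p - 1))
        ∂(volume.restrict (Ioi 0)) = ENNReal.ofReal a ^ p := by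
    rw [Measure.restrict_restrict (hmeas _), hset, setLIntegral_Ioo_mul_rpow_sub_one hp ha]
  rcases eq_or_ne v ∞ with rfl | hv
  · rw [ENNReal.top_rpow_of_pos hp]
    refine ENNReal.eq_top_of_forall_nnreal_le fun r => ?_
    calc (r : ℝ≥0∞) = ENNReal.ofReal ((r : ℝ) ^ p⁻¹) ^ p := by
          rw [← ENNReal.ofReal_rpow_of_nonneg r.coe_nonneg (by positivity),
            ENNReal.rpow_inv_rpow hp.ne', ENNReal.ofReal_coe_nnreal]
      _ ≤ _ := by
          rw [← hfin _ (by positivity)]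
          exact lintegral_mono_set fun t _ => ENNReal.ofReal_lt_top
  · simpa only [ENNReal.ofReal_toReal hv] using hfin v.toReal ENNReal.toReal_nonneg

lemma setLIntegral_le_ofReal_mul_rpow_sub_two_mul_le {r : ℝ} (hr : 0 < r) (hr1 : r < 1)
    (v : ℝ≥0∞) :
    (∫⁻ t in {t : ℝ | v ≤ ENNReal.ofReal t}, ENNReal.ofReal (r * t ^ (r - 2))
      ∂(volume.restrict (Ioi 0))) * v ≤ ENNReal.ofReal (r / (1 - r)) * v ^ r := by
  have : 0 < 1 - r := sub_pos.2 hr1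
  rcases eq_or_ne v ∞ with rfl | hv
  · simp
  rcases eq_or_ne v 0 with rfl | hv0
  · simp
  lift v to NNReal using hv
  obtain ⟨a, ha⟩ : ∃ a : ℝ, a = v := ⟨v, rfl⟩
  have ha0 : 0 < a := ha ▸ NNReal.coe_pos.2 (pos_iff_ne_zero.2 (by exact_mod_cast hv0))
  have hv' : (v : ℝ≥0∞) = ENNReal.ofReal a := by rw [ha, ENNReal.ofReal_coe_nnreal]
  have hset : {t : ℝ | ENNReal.ofReal a ≤ ENNReal.ofReal t} ∩ Ioi 0 = Ici a := by
    ext t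
    simp only [mem_inter_iff, mem_ofPred_eq, mem_Ioi, mem_Ici]
    rw [and_comm, and_congr_right fun ht => ENNReal.ofReal_le_ofReal_iff ht.le]
    exact and_iff_right_of_imp ha0.trans_le
  have hint : ∫⁻ t in Ioi a, ENNReal.ofReal (r * t ^ (r - 2)) =
      ENNReal.ofReal (r / (1 - r) * a ^ (r - 1)) := by
    rw [← ofReal_integral_eq_lintegral_ofReal
      (((integrableOn_Ioi_rpow_iff ha0).2 (by linarith)).const_mul r)]
    · rw [integral_const_mul, integral_Ioi_rpow_of_lt (by linarith) ha0,
        show r - 2 + 1 = -(1 - r) by ring, neg_div_neg_eq, neg_sub, mul_div_left_comm, mul_comm]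
    · filter_upwards [ae_restrict_mem measurableSet_Ioi] with t ht
      have : 0 < t := ha0.trans ht
      positivity
  refine le_of_eq ?_
  rw [hv', Measure.restrict_restrict (measurableSet_le measurable_const (by fun_prop)), hset,
    setLIntegral_congr Ioi_ae_eq_Ici.symm, hint, ENNReal.ofReal_rpow_of_pos ha0,
    ← ENNReal.ofReal_mul (by positivity), ← ENNReal.ofReal_mul (by positivity), mul_assoc,
    ← Real.rpow_add_one ha0.ne', sub_add_cancel]

lemma lintegral_rpow_mul_eq_lintegral_setLIntegral_lt [SFinite μ] {p : ℝ} (hp : 0 < p)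
    {v w : α → ℝ≥0∞} (hv : Measurable v) (hw : Measurable w) :
    ∫⁻ x, v x ^ p * w x ∂μ = ∫⁻ t in Ioi (0 : ℝ), ENNReal.ofReal (p * t ^ (p - 1)) *
      ∫⁻ x in {x | ENNReal.ofReal t < v x}, w x ∂μ := by
  simp_rw [← setLIntegral_ofReal_lt_mul_rpow_sub_one hp]
  exact (lintegral_mul_setLIntegral_swap (S := {z : ℝ × α | ENNReal.ofReal z.1 < v z.2})
    (measurableSet_lt (by fun_prop) (by fun_prop)) (by fun_prop) hw).symm

lemma lintegral_rpow_eq_lintegral_measure_lt [SFinite μ] {p : ℝ} (hp : 0 < p)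
    {v : α → ℝ≥0∞} (hv : Measurable v) :
    ∫⁻ x, v x ^ p ∂μ = ∫⁻ t in Ioi (0 : ℝ), ENNReal.ofReal (p * t ^ (p - 1)) *
      μ {x | ENNReal.ofReal t < v x} := by
  simpa only [mul_one, setLIntegral_one] using
    lintegral_rpow_mul_eq_lintegral_setLIntegral_lt (μ := μ) hp hv (measurable_const (a := 1))

lemma lintegral_setLIntegral_le_ofReal_le [SFinite μ] {r : ℝ} (hr : 0 < r) (hr1 : r < 1)
    {v : α → ℝ≥0∞} (hv : Measurable v) :
    ∫⁻ t in Ioi (0 : ℝ), ENNReal.ofReal (r * t ^ (r - 2)) *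
      ∫⁻ x in {x | v x ≤ ENNReal.ofReal t}, v x ∂μ ≤
        ENNReal.ofReal (r / (1 - r)) * ∫⁻ x, v x ^ r ∂μ := by
  rw [← lintegral_const_mul' _ _ ENNReal.ofReal_ne_top]
  refine (lintegral_mul_setLIntegral_swap (S := {z : ℝ × α | v z.2 ≤ ENNReal.ofReal z.1})
    (measurableSet_le (by fun_prop) (by fun_prop)) (by fun_prop) hv).trans_le ?_
  exact lintegral_mono fun x => setLIntegral_le_ofReal_mul_rpow_sub_two_mul_le hr hr1 (v x)

lemma lintegral_rpow_le_of_mul_measure_lt_le [SFinite μ] {s : ℝ} (hs : 1 < s)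
    {u v w : α → ℝ≥0∞} (hu : Measurable u) (hv : Measurable v) (hw : Measurable w)
    (h : ∀ t : ℝ, 0 < t → ENNReal.ofReal t * μ {x | ENNReal.ofReal t < u x} ≤
      ∫⁻ x in {x | ENNReal.ofReal t < v x}, w x ∂μ) :
    ∫⁻ x, u x ^ s ∂μ ≤ ENNReal.ofReal (s / (s - 1)) * ∫⁻ x, v x ^ (s - 1) * w x ∂μ := by
  have hs1 : 0 < s - 1 := sub_pos.2 hs
  rw [lintegral_rpow_eq_lintegral_measure_lt (by linarith) hu,
    lintegral_rpow_mul_eq_lintegral_setLIntegral_lt hs1 hv hw,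
    ← lintegral_const_mul' _ _ ENNReal.ofReal_ne_top]
  refine setLIntegral_mono' measurableSet_Ioi fun t (ht : 0 < t) => ?_
  have hweight : ENNReal.ofReal (s * t ^ (s - 1)) = ENNReal.ofReal (s / (s - 1)) *
      (ENNReal.ofReal ((s - 1) * t ^ (s - 1 - 1)) * ENNReal.ofReal t) := by
    rw [← ENNReal.ofReal_mul (by positivity), ← ENNReal.ofReal_mul (by positivity),
      Real.rpow_sub_one ht.ne' (s - 1)]
    congr 1
    field_simp
  rw [hweight, mul_assoc, mul_assoc]
  gcongr
  exact h t ht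

lemma lintegral_rpow_le_of_measure_lt_le [SFinite μ] {r : ℝ} (hr : 0 < r) (hr1 : r < 1)
    {u v : α → ℝ≥0∞} (hu : Measurable u) (hv : Measurable v) {b c : ℝ≥0∞}
    (h : ∀ t : ℝ, 0 < t → μ {x | ENNReal.ofReal t < u x} ≤
      b * μ {x | ENNReal.ofReal t < v x} +
        c * ((ENNReal.ofReal t)⁻¹ * ∫⁻ x in {x | v x ≤ ENNReal.ofReal t}, v x ∂μ)) :
    ∫⁻ x, u x ^ r ∂μ ≤ (b + c * ENNReal.ofReal (r / (1 - r))) * ∫⁻ x, v x ^ r ∂μ := by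
  have hmeas_lt : Measurable fun t : ℝ => μ {x | ENNReal.ofReal t < v x} :=
    Antitone.measurable fun t t' htt' =>
      measure_mono fun x hx => (ENNReal.ofReal_le_ofReal htt').trans_lt hx
  have hmeas_le : Measurable fun t : ℝ => ∫⁻ x in {x | v x ≤ ENNReal.ofReal t}, v x ∂μ :=
    Monotone.measurable fun t t' htt' =>
      lintegral_mono_set fun x hx => le_trans hx (ENNReal.ofReal_le_ofReal htt')
  rw [lintegral_rpow_eq_lintegral_measure_lt hr hu]
  calc ∫⁻ t in Ioi (0 : ℝ), ENNReal.ofReal (r * t ^ (r - 1)) * μ {x | ENNReal.ofReal t < u x}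
      ≤ ∫⁻ t in Ioi (0 : ℝ),
          (b * (ENNReal.ofReal (r * t ^ (r - 1)) * μ {x | ENNReal.ofReal t < v x}) +
            c * (ENNReal.ofReal (r * t ^ (r - 2)) *
              ∫⁻ x in {x | v x ≤ ENNReal.ofReal t}, v x ∂μ)) := by
        refine setLIntegral_mono' measurableSet_Ioi fun t (ht : 0 < t) => ?_
        have hweight : ENNReal.ofReal (r * t ^ (r - 2)) =
            ENNReal.ofReal (r * t ^ (r - 1)) * (ENNReal.ofReal t)⁻¹ := by
          rw [← ENNReal.ofReal_inv_of_pos ht, ← ENNReal.ofReal_mul (by positivity),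
            show r - 2 = r - 1 - 1 by ring, Real.rpow_sub_one ht.ne' (r - 1), mul_assoc,
            div_eq_mul_inv]
        refine (mul_le_mul_right (h t ht) _).trans_eq ?_
        rw [hweight]
        ring
    _ = b * ∫⁻ x, v x ^ r ∂μ + c * ∫⁻ t in Ioi (0 : ℝ), ENNReal.ofReal (r * t ^ (r - 2)) *
          ∫⁻ x in {x | v x ≤ ENNReal.ofReal t}, v x ∂μ := by
        have hmeas₁ : Measurable fun t : ℝ =>
            ENNReal.ofReal (r * t ^ (r - 1)) * μ {x | ENNReal.ofReal t < v x} :=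
          Measurable.mul (by fun_prop) hmeas_lt
        have hmeas₂ : Measurable fun t : ℝ => ENNReal.ofReal (r * t ^ (r - 2)) *
            ∫⁻ x in {x | v x ≤ ENNReal.ofReal t}, v x ∂μ :=
          Measurable.mul (by fun_prop) hmeas_le
        rw [lintegral_add_left (hmeas₁.const_mul b), lintegral_const_mul _ hmeas₁,
          lintegral_const_mul _ hmeas₂, ← lintegral_rpow_eq_lintegral_measure_lt hr hv]
    _ ≤ b * ∫⁻ x, v x ^ r ∂μ + c * (ENNReal.ofReal (r / (1 - r)) * ∫⁻ x, v x ^ r ∂μ) := by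
        gcongr
        exact lintegral_setLIntegral_le_ofReal_le hr hr1 hv
    _ = (b + c * ENNReal.ofReal (r / (1 - r))) * ∫⁻ x, v x ^ r ∂μ := by ring

lemma lintegral_rpow_le_of_forall_lintegral_mul_le [SigmaFinite μ] {r s : ℝ}
    (hrs : r.HolderConjugate s) {f : α → ℝ≥0∞} {K : ℝ≥0∞}
    (h : ∀ g : α → ℝ≥0∞, Measurable g →
      ∫⁻ x, f x * g x ∂μ ≤ K * (∫⁻ x, g x ^ s ∂μ) ^ s⁻¹) :
    ∫⁻ x, f x ^ r ∂μ ≤ K ^ r := by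
  have hr := hrs.pos
  have hs := hrs.symm.pos
  refine le_of_forall_lt fun L hL => ?_
  obtain ⟨φ, hφf, hφfin, hLφ⟩ : ∃ φ : SimpleFunc α NNReal, (∀ x, (φ x : ℝ≥0∞) ≤ f x ^ r) ∧
      ∫⁻ x, φ x ∂μ < ∞ ∧ L < ∫⁻ x, φ x ∂μ := by
    rw [lintegral_eq_nnreal] at hL
    simp only [lt_iSup_iff] at hL
    obtain ⟨ψ, hψf, hLψ⟩ := hL
    rw [← SimpleFunc.lintegral_eq_lintegral] at hLψ
    obtain ⟨φ, hφψ, hφ⟩ := SimpleFunc.exists_lt_lintegral_simpleFunc_of_lt_lintegral hLψ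
    exact ⟨φ, fun x => (ENNReal.coe_le_coe.2 (hφψ x)).trans (hψf x), hφ⟩
  set I := ∫⁻ x, (φ x : ℝ≥0∞) ∂μ
  have hI0 : I ≠ 0 := (zero_le.trans_lt hLφ).ne'
  have hsplit : I ^ r⁻¹ * I ^ s⁻¹ = I := by
    rw [← ENNReal.rpow_add _ _ hI0 hφfin.ne, hrs.inv_add_inv_eq_one, ENNReal.rpow_one]
  have htest : I ≤ K * I ^ s⁻¹ :=
    calc I = ∫⁻ x, (φ x : ℝ≥0∞) ^ r⁻¹ * (φ x : ℝ≥0∞) ^ s⁻¹ ∂μ := by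
          refine lintegral_congr fun x => ?_
          rw [← ENNReal.rpow_add_of_nonneg _ _ hrs.inv_nonneg hrs.symm.inv_nonneg,
            hrs.inv_add_inv_eq_one, ENNReal.rpow_one]
      _ ≤ ∫⁻ x, f x * (φ x : ℝ≥0∞) ^ s⁻¹ ∂μ := by
          gcongr with x
          exact (ENNReal.rpow_inv_le_iff hr).2 (hφf x)
      _ ≤ K * I ^ s⁻¹ := by
          have hmeas : Measurable fun x => (φ x : ℝ≥0∞) := φ.measurable.coe_nnreal_ennreal
          simpa only [ENNReal.rpow_inv_rpow hs.ne'] using h _ (hmeas.pow_const s⁻¹)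
  have hIK : I ^ r⁻¹ ≤ K := by
    refine (ENNReal.mul_le_mul_iff_left ?_ ?_).1 (hsplit.trans_le htest)
    · simp [ENNReal.rpow_eq_zero_iff, hI0, hφfin.ne]
    · exact ENNReal.rpow_ne_top_of_nonneg hrs.symm.inv_nonneg hφfin.ne
  exact hLφ.trans_le ((ENNReal.rpow_inv_le_iff hr).1 hIK)

end RealVariable

section MaximalFunction

/-- The uncentred Hardy–Littlewood maximal function: the supremum of the averages of `f` over all
balls containing `x`. Leaving the balls uncentred makes its superlevel sets unions of balls. -/
noncomputable def maximalFunction {X : Type*} [PseudoMetricSpace X] [MeasurableSpace X]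
    (μ : Measure X) (f : X → ℝ≥0∞) (x : X) : ℝ≥0∞ :=
  ⨆ (c : X) (r : ℝ) (_ : x ∈ ball c r), ⨍⁻ y in ball c r, f y ∂μ

section PseudoMetricSpace

variable {X : Type*} [PseudoMetricSpace X] [MeasurableSpace X] {μ : Measure X}
  {f g : X → ℝ≥0∞} {a : ℝ≥0∞}

lemma setLAverage_ball_le_maximalFunction {c x : X} {r : ℝ} (hx : x ∈ ball c r) :
    ⨍⁻ y in ball c r, f y ∂μ ≤ maximalFunction μ f x :=
  le_iSup_of_le c <| le_iSup_of_le r <| le_iSup_of_le hx le_rfl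

lemma lt_maximalFunction_iff {x : X} :
    a < maximalFunction μ f x ↔ ∃ c r, x ∈ ball c r ∧ a < ⨍⁻ y in ball c r, f y ∂μ := by
  simp only [maximalFunction, lt_iSup_iff, exists_prop]

lemma lowerSemicontinuous_maximalFunction : LowerSemicontinuous (maximalFunction μ f) := by
  rw [lowerSemicontinuous_iff_isOpen_preimage]
  refine fun a => isOpen_iff_mem_nhds.2 fun x hx => ?_
  obtain ⟨c, r, hxc, ha⟩ := lt_maximalFunction_iff.1 hx
  filter_upwards [isOpen_ball.mem_nhds hxc] with z hz
  exact ha.trans_le (setLAverage_ball_le_maximalFunction hz)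

lemma measurable_maximalFunction [OpensMeasurableSpace X] : Measurable (maximalFunction μ f) :=
  lowerSemicontinuous_maximalFunction.measurable

lemma maximalFunction_le_add_const {c : ℝ≥0∞} (h : ∀ x, f x ≤ g x + c) (x : X) :
    maximalFunction μ f x ≤ maximalFunction μ g x + c := by
  refine iSup_le fun z => iSup_le fun r => iSup_le fun hx => ?_
  calc ⨍⁻ y in ball z r, f y ∂μ ≤ ⨍⁻ y in ball z r, (g y + c) ∂μ := lintegral_mono h
    _ = ⨍⁻ y in ball z r, g y ∂μ + c * μ (ball z r) / μ (ball z r) := by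
        rw [setLAverage_eq, lintegral_add_right _ measurable_const, setLIntegral_const,
          ENNReal.add_div, ← setLAverage_eq]
    _ ≤ maximalFunction μ g x + c :=
        add_le_add (setLAverage_ball_le_maximalFunction hx) (ENNReal.div_le_of_le_mul le_rfl)

end PseudoMetricSpace

open Module Set

variable {E : Type*} [NormedAddCommGroup E] [NormedSpace ℝ E] [FiniteDimensional ℝ E]
  [MeasurableSpace E] [BorelSpace E] {μ : Measure E} [μ.IsAddHaarMeasure] {f : E → ℝ≥0∞}

lemma measure_ball_mul (x y : E) {r : ℝ} (hr : 0 < r) (s : ℝ) :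
    μ (ball x (r * s)) = ENNReal.ofReal r ^ finrank ℝ E * μ (ball y s) := by
  rw [Measure.addHaar_ball_mul_of_pos μ x hr, Measure.addHaar_ball_center μ y,
    ENNReal.ofReal_pow hr.le]

lemma mul_measure_biUnion_ball_le {ι : Type*} {t : Set ι} {c : ι → E} {r : ι → ℝ} {R : ℝ}
    (hr : ∀ i ∈ t, 0 < r i) (hR : ∀ i ∈ t, r i ≤ R) {a : ℝ≥0∞}
    (ha : ∀ i ∈ t, a * μ (ball (c i) (r i)) ≤ ∫⁻ y in ball (c i) (r i), f y ∂μ) :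
    a * μ (⋃ i ∈ t, ball (c i) (r i)) ≤ 4 ^ finrank ℝ E * ∫⁻ y, f y ∂μ := by
  obtain ⟨u, hut, hdisj, hcover⟩ :=
    Vitali.exists_disjoint_subfamily_covering_enlargement_ball t c r R hR 4 (by norm_num)
  have hu : u.Countable := hdisj.countable_of_isOpen (fun _ _ => isOpen_ball)
    fun i hi => nonempty_ball.2 (hr i (hut hi))
  have hsub : ⋃ i ∈ t, ball (c i) (r i) ⊆ ⋃ i ∈ u, ball (c i) (4 * r i) :=
    iUnion₂_subset fun i hi =>
      let ⟨j, hj, hij⟩ := hcover i hi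
      hij.trans (subset_biUnion_of_mem (u := fun j => ball (c j) (4 * r j)) hj)
  calc a * μ (⋃ i ∈ t, ball (c i) (r i))
      ≤ a * ∑' i : u, μ (ball (c i) (4 * r i)) := by
        gcongr
        exact (measure_mono hsub).trans (measure_biUnion_le μ hu _)
    _ = 4 ^ finrank ℝ E * ∑' i : u, a * μ (ball (c i) (r i)) := by
        rw [← ENNReal.tsum_mul_left, ← ENNReal.tsum_mul_left]
        refine tsum_congr fun i => ?_
        rw [measure_ball_mul (c i) (c i) four_pos, ENNReal.ofReal_ofNat, mul_left_comm]
    _ ≤ 4 ^ finrank ℝ E * ∑' i : u, ∫⁻ y in ball (c i) (r i), f y ∂μ := by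
        gcongr with i
        exact ha i (hut i.2)
    _ = 4 ^ finrank ℝ E * ∫⁻ y in ⋃ i ∈ u, ball (c i) (r i), f y ∂μ := by
        rw [lintegral_biUnion hu (fun _ _ => measurableSet_ball) hdisj]
    _ ≤ 4 ^ finrank ℝ E * ∫⁻ y, f y ∂μ := by
        gcongr
        exact Measure.restrict_le_self

lemma mul_measure_lt_maximalFunction_le (a : ℝ≥0∞) :
    a * μ {x | a < maximalFunction μ f x} ≤ 4 ^ finrank ℝ E * ∫⁻ y, f y ∂μ := by
  let T (N : ℕ) : Set (E × ℝ) := {z | 0 < z.2 ∧ z.2 ≤ N ∧ a < ⨍⁻ y in ball z.1 z.2, f y ∂μ}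
  have hT : Monotone T := fun M N hMN z hz =>
    ⟨hz.1, hz.2.1.trans (Nat.cast_le.2 hMN), hz.2.2⟩
  have hset : {x | a < maximalFunction μ f x} = ⋃ N, ⋃ z ∈ T N, ball z.1 z.2 := by
    ext x
    simp only [mem_ofPred_eq, lt_maximalFunction_iff, mem_iUnion, exists_prop]
    constructor
    · rintro ⟨c, r, hx, ha⟩
      obtain ⟨N, hN⟩ := exists_nat_ge r
      exact ⟨N, (c, r), ⟨pos_of_mem_ball hx, hN, ha⟩, hx⟩
    · rintro ⟨N, z, hz, hx⟩
      exact ⟨z.1, z.2, hx, hz.2.2⟩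
  have hmono : Monotone fun N => ⋃ z ∈ T N, ball z.1 z.2 :=
    fun M N hMN => biUnion_subset_biUnion_left (hT hMN)
  rw [hset, hmono.measure_iUnion, ENNReal.mul_iSup]
  refine iSup_le fun N => mul_measure_biUnion_ball_le (fun z hz => hz.1) (fun z hz => hz.2.1)
    fun z hz => ENNReal.mul_le_of_le_div ?_
  rw [← setLAverage_eq]
  exact hz.2.2.le

lemma mul_measure_lt_maximalFunction_le_setLIntegral (hf : Measurable f) (a : ℝ≥0∞) :
    a * μ {x | a < maximalFunction μ f x} ≤
      2 * 4 ^ finrank ℝ E * ∫⁻ y in {y | a / 2 < f y}, f y ∂μ := by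
  set S := {y | a / 2 < f y}
  have hS : MeasurableSet S := measurableSet_lt measurable_const hf
  have hfS (x : E) : f x ≤ S.indicator f x + a / 2 := by
    by_cases hx : x ∈ S
    · simp [indicator_of_mem hx]
    · simpa [indicator_of_notMem hx] using not_lt.1 hx
  have hsub : {x | a < maximalFunction μ f x} ⊆
      {x | a / 2 < maximalFunction μ (S.indicator f) x} := by
    intro x hx
    by_contra hle
    refine hx.not_ge ((maximalFunction_le_add_const hfS x).trans ?_)
    exact (add_le_add_left (not_lt.1 hle) _).trans_eq (ENNReal.add_halves a)
  calc a * μ {x | a < maximalFunction μ f x}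
      ≤ 2 * (a / 2 * μ {x | a / 2 < maximalFunction μ (S.indicator f) x}) := by
        rw [← mul_assoc, ENNReal.mul_div_cancel two_ne_zero ENNReal.ofNat_ne_top]
        gcongr
    _ ≤ 2 * (4 ^ finrank ℝ E * ∫⁻ y, S.indicator f y ∂μ) := by
        gcongr 2 * ?_
        exact mul_measure_lt_maximalFunction_le (a / 2)
    _ = 2 * 4 ^ finrank ℝ E * ∫⁻ y in S, f y ∂μ := by
        rw [lintegral_indicator hS, mul_assoc]

lemma lintegral_maximalFunction_rpow_le {s : ℝ} (hs : 1 < s) (hf : Measurable f) :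
    ∫⁻ x, maximalFunction μ f x ^ s ∂μ ≤
      ENNReal.ofReal (s / (s - 1)) * (2 ^ s * 4 ^ finrank ℝ E) * ∫⁻ x, f x ^ s ∂μ := by
  have hs1 : 0 < s - 1 := sub_pos.2 hs
  have hweak (t : ℝ) : ENNReal.ofReal t * μ {x | ENNReal.ofReal t < maximalFunction μ f x} ≤
      ∫⁻ x in {x | ENNReal.ofReal t < f x * 2}, 2 * 4 ^ finrank ℝ E * f x ∂μ := by
    rw [lintegral_const_mul _ hf]
    simpa only [ENNReal.div_lt_iff (.inl two_ne_zero) (.inl ENNReal.ofNat_ne_top)] using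
      mul_measure_lt_maximalFunction_le_setLIntegral (μ := μ) hf (ENNReal.ofReal t)
  calc ∫⁻ x, maximalFunction μ f x ^ s ∂μ
      ≤ ENNReal.ofReal (s / (s - 1)) *
          ∫⁻ x, (f x * 2) ^ (s - 1) * (2 * 4 ^ finrank ℝ E * f x) ∂μ :=
        lintegral_rpow_le_of_mul_measure_lt_le hs measurable_maximalFunction
          (hf.mul_const 2) (hf.const_mul _) fun t _ => hweak t
    _ = ENNReal.ofReal (s / (s - 1)) * ∫⁻ x, 2 ^ s * 4 ^ finrank ℝ E * f x ^ s ∂μ := by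
        have hpow (z : ℝ≥0∞) : z ^ s = z ^ (s - 1) * z := by
          simpa only [sub_add_cancel, ENNReal.rpow_one] using
            ENNReal.rpow_add_of_nonneg (x := z) (s - 1) 1 hs1.le zero_le_one
        congr 1
        refine lintegral_congr fun x => ?_
        rw [ENNReal.mul_rpow_of_nonneg _ _ hs1.le, hpow (f x), hpow 2]
        ring
    _ = _ := by
        rw [lintegral_const_mul _ (hf.pow_const s), ← mul_assoc]

end MaximalFunction

section ConeIntegral

open Module Set Function

/-- The integral of `G` over the cone of aperture `β` with vertex `x`, averaged over each slice:
the area functional with exponent `1`. Restricting to `t > 0` avoids averages over empty balls. -/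
noncomputable def coneIntegral {X : Type*} [PseudoMetricSpace X] [MeasurableSpace X]
    (μ : Measure X) (ν : Measure ℝ) (β : ℝ) (G : X → ℝ → ℝ≥0∞) (x : X) : ℝ≥0∞ :=
  ∫⁻ t in Ioi 0, ⨍⁻ y in ball x (β * t), G y t ∂μ ∂ν

lemma setLAverage_ball_const {X : Type*} [PseudoMetricSpace X] [ProperSpace X] [MeasurableSpace X]
    {μ : Measure X} [μ.IsOpenPosMeasure] [IsFiniteMeasureOnCompacts μ] (x : X) {r : ℝ}
    (hr : 0 < r) (c : ℝ≥0∞) : ⨍⁻ _ in ball x r, c ∂μ = c :=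
  setLAverage_const (measure_ball_pos μ x hr).ne' measure_ball_lt_top.ne c

section Measurability

variable {X : Type*} [PseudoMetricSpace X] [SecondCountableTopology X] [MeasurableSpace X]
  [OpensMeasurableSpace X] {μ : Measure X} [SFinite μ] {ν : Measure ℝ} [SFinite ν]
  {G : X → ℝ → ℝ≥0∞}

lemma measurable_setLAverage_ball (hG : Measurable (uncurry G)) (β : ℝ) :
    Measurable fun z : X × ℝ => ⨍⁻ y in ball z.1 (β * z.2), G y z.2 ∂μ := by
  have hS : MeasurableSet {z : (X × ℝ) × X | dist z.2 z.1.1 < β * z.1.2} :=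
    measurableSet_lt (by fun_prop) (by fun_prop)
  have hGS : Measurable ({z : (X × ℝ) × X | dist z.2 z.1.1 < β * z.1.2}.indicator
      fun z => G z.2 z.1.2) :=
    (hG.comp (measurable_snd.prodMk (measurable_snd.comp measurable_fst))).indicator hS
  simp_rw [setLAverage_eq, ← lintegral_indicator measurableSet_ball]
  exact (hGS.lintegral_prod_right' (ν := μ)).div (measurable_measure_prodMk_left hS)

lemma measurable_coneIntegral (hG : Measurable (uncurry G)) (β : ℝ) :
    Measurable (coneIntegral μ ν β G) :=
  (measurable_setLAverage_ball hG β).lintegral_prod_right'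

end Measurability

variable {E : Type*} [NormedAddCommGroup E] [NormedSpace ℝ E] [FiniteDimensional ℝ E]
  [MeasurableSpace E] [BorelSpace E] {μ : Measure E} [μ.IsAddHaarMeasure]
  {ν : Measure ℝ} [SFinite ν] {G : E → ℝ → ℝ≥0∞} {f g h : E → ℝ≥0∞} {r s β : ℝ}

lemma lintegral_setLAverage_ball_mul (hf : Measurable f) (hg : Measurable g) (r : ℝ) :
    ∫⁻ x, (⨍⁻ y in ball x r, f y ∂μ) * g x ∂μ = ∫⁻ y, f y * ⨍⁻ x in ball y r, g x ∂μ ∂μ := by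
  set w := (μ (ball (0 : E) r))⁻¹
  have hball (y : E) : {x | (y, x) ∈ {z : E × E | dist z.1 z.2 < r}} = ball y r := by
    ext x
    exact mem_ball'.symm
  have hswap := lintegral_mul_setLIntegral_swap (μ := μ) (ν := μ)
    (S := {z : E × E | dist z.1 z.2 < r}) (measurableSet_lt (by fun_prop) (by fun_prop))
    hf (hg.const_mul w)
  simp only [hball, lintegral_const_mul w hg] at hswap
  simp only [setLAverage_eq, Measure.addHaar_ball_center μ, ENNReal.div_eq_inv_mul]
  rw [hswap]
  refine lintegral_congr fun x => ?_
  change _ = (∫⁻ y in ball x r, f y ∂μ) * (w * g x)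
  ring

lemma lintegral_coneIntegral_mul (hG : Measurable (uncurry G)) (hg : Measurable g) (β : ℝ) :
    ∫⁻ x, coneIntegral μ ν β G x * g x ∂μ =
      ∫⁻ t in Ioi 0, ∫⁻ y, G y t * ⨍⁻ x in ball y (β * t), g x ∂μ ∂μ ∂ν := by
  have hmeas := measurable_setLAverage_ball (μ := μ) hG β
  calc ∫⁻ x, coneIntegral μ ν β G x * g x ∂μ
      = ∫⁻ x, ∫⁻ t in Ioi 0, (⨍⁻ y in ball x (β * t), G y t ∂μ) * g x ∂ν ∂μ :=
        lintegral_congr fun x => (lintegral_mul_const _ (hmeas.comp measurable_prodMk_left)).symm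
    _ = ∫⁻ t in Ioi 0, ∫⁻ x, (⨍⁻ y in ball x (β * t), G y t ∂μ) * g x ∂μ ∂ν :=
        lintegral_lintegral_swap (hmeas.mul (hg.comp measurable_fst)).aemeasurable
    _ = ∫⁻ t in Ioi 0, ∫⁻ y, G y t * ⨍⁻ x in ball y (β * t), g x ∂μ ∂μ ∂ν :=
        lintegral_congr fun t =>
          lintegral_setLAverage_ball_mul (hG.comp measurable_prodMk_right) hg _

lemma lintegral_coneIntegral_mul_mono (hG : Measurable (uncurry G)) (hg : Measurable g)
    (hh : Measurable h) {α β : ℝ}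
    (hle : ∀ y t, 0 < t → ⨍⁻ x in ball y (α * t), g x ∂μ ≤ ⨍⁻ x in ball y (β * t), h x ∂μ) :
    ∫⁻ x, coneIntegral μ ν α G x * g x ∂μ ≤ ∫⁻ x, coneIntegral μ ν β G x * h x ∂μ := by
  rw [lintegral_coneIntegral_mul hG hg, lintegral_coneIntegral_mul hG hh]
  refine setLIntegral_mono' measurableSet_Ioi fun t ht => lintegral_mono fun y => ?_
  gcongr
  exact hle y t ht

lemma lintegral_coneIntegral_eq (hG : Measurable (uncurry G)) (hβ : 0 < β) :
    ∫⁻ x, coneIntegral μ ν β G x ∂μ = ∫⁻ t in Ioi 0, ∫⁻ y, G y t ∂μ ∂ν := by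
  have h := lintegral_coneIntegral_mul (μ := μ) (ν := ν) hG (measurable_const (a := 1)) β
  simp only [mul_one] at h
  rw [h]
  refine setLIntegral_congr_fun measurableSet_Ioi fun t ht => lintegral_congr fun y => ?_
  rw [setLAverage_ball_const y (mul_pos hβ ht), mul_one]

lemma setLAverage_ball_mul_le_setLAverage_maximalFunction (hβ : 1 ≤ β) (hr : 0 < r) (y : E) :
    ⨍⁻ x in ball y (β * r), f x ∂μ ≤ ⨍⁻ x in ball y r, maximalFunction μ f x ∂μ := by
  have hsub : ball y r ⊆ ball y (β * r) := ball_subset_ball (le_mul_of_one_le_left hr.le hβ)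
  rw [← setLAverage_ball_const (μ := μ) y hr (⨍⁻ x in ball y (β * r), f x ∂μ),
    setLAverage_eq _ _ (ball y r), setLAverage_eq _ _ (ball y r)]
  gcongr ?_ / _
  exact setLIntegral_mono' measurableSet_ball fun z hz =>
    setLAverage_ball_le_maximalFunction (hsub hz)

lemma lintegral_coneIntegral_rpow_le_of_one_lt (hr : r.HolderConjugate s)
    (hG : Measurable (uncurry G)) (hβ : 1 ≤ β) :
    ∫⁻ x, coneIntegral μ ν β G x ^ r ∂μ ≤
      (ENNReal.ofReal (s / (s - 1)) * (2 ^ s * 4 ^ finrank ℝ E)) ^ (r / s) *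
        ∫⁻ x, coneIntegral μ ν 1 G x ^ r ∂μ := by
  set K := ENNReal.ofReal (s / (s - 1)) * (2 ^ s * 4 ^ finrank ℝ E)
  have hr0 := hr.pos
  have hs0 := hr.symm.pos
  set I := ∫⁻ x, coneIntegral μ ν 1 G x ^ r ∂μ
  have hdual (g : E → ℝ≥0∞) (hg : Measurable g) : ∫⁻ x, coneIntegral μ ν β G x * g x ∂μ ≤
      I ^ r⁻¹ * K ^ s⁻¹ * (∫⁻ x, g x ^ s ∂μ) ^ s⁻¹ :=
    calc ∫⁻ x, coneIntegral μ ν β G x * g x ∂μ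
        ≤ ∫⁻ x, coneIntegral μ ν 1 G x * maximalFunction μ g x ∂μ :=
          lintegral_coneIntegral_mul_mono hG hg measurable_maximalFunction fun y t ht =>
            by simpa only [one_mul] using
              setLAverage_ball_mul_le_setLAverage_maximalFunction hβ ht y
      _ ≤ I ^ r⁻¹ * (∫⁻ x, maximalFunction μ g x ^ s ∂μ) ^ s⁻¹ := by
          simpa only [one_div, Pi.mul_apply] using ENNReal.lintegral_mul_le_Lp_mul_Lq μ hr
            (measurable_coneIntegral hG 1).aemeasurable measurable_maximalFunction.aemeasurable
      _ ≤ I ^ r⁻¹ * (K * ∫⁻ x, g x ^ s ∂μ) ^ s⁻¹ := by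
          gcongr
          exact lintegral_maximalFunction_rpow_le hr.symm.lt hg
      _ = I ^ r⁻¹ * K ^ s⁻¹ * (∫⁻ x, g x ^ s ∂μ) ^ s⁻¹ := by
          rw [ENNReal.mul_rpow_of_nonneg _ _ hr.symm.inv_nonneg, mul_assoc]
  refine (lintegral_rpow_le_of_forall_lintegral_mul_le hr hdual).trans_eq ?_
  rw [ENNReal.mul_rpow_of_nonneg _ _ hr0.le, ENNReal.rpow_inv_rpow hr0.ne', ← ENNReal.rpow_mul,
    mul_comm, inv_mul_eq_div]

lemma lintegral_coneIntegral_eq_coneIntegral_one (hG : Measurable (uncurry G)) (hβ : 0 < β) :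
    ∫⁻ x, coneIntegral μ ν β G x ∂μ = ∫⁻ x, coneIntegral μ ν 1 G x ∂μ := by
  rw [lintegral_coneIntegral_eq hG hβ, lintegral_coneIntegral_eq hG one_pos]

/-- The halo of `O` at level `κ`: the points contained in some ball of which `O` fills a proportion
greater than `κ`. -/
def halo {X : Type*} [PseudoMetricSpace X] [MeasurableSpace X] (μ : Measure X) (κ : ℝ≥0∞)
    (O : Set X) : Set X :=
  {x | κ < maximalFunction μ (O.indicator 1) x}

lemma measurableSet_halo {X : Type*} [PseudoMetricSpace X] [MeasurableSpace X]
    [OpensMeasurableSpace X] {μ : Measure X} {κ : ℝ≥0∞} {O : Set X} :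
    MeasurableSet (halo μ κ O) :=
  measurableSet_lt measurable_const measurable_maximalFunction

variable {O : Set E} {κ : ℝ≥0∞}

lemma measure_halo_inv_le (hO : MeasurableSet O) (hκ0 : κ ≠ 0) (hκ : κ ≠ ∞) :
    μ (halo μ κ⁻¹ O) ≤ 4 ^ finrank ℝ E * κ * μ O := by
  have h := mul_measure_lt_maximalFunction_le (μ := μ) (f := O.indicator 1) κ⁻¹
  rw [lintegral_indicator_one hO] at h
  calc μ (halo μ κ⁻¹ O) ≤ κ * (4 ^ finrank ℝ E * μ O) :=
        (ENNReal.inv_mul_le_iff hκ0 hκ).1 h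
    _ = 4 ^ finrank ℝ E * κ * μ O := by ring

lemma measure_ball_le_two_mul_measure_diff (hO : MeasurableSet O) (hβ : 1 ≤ β) (hr : 0 < r)
    {x y : E} (hx : x ∈ ball y (β * r))
    (hxO : x ∉ halo μ (2 * ENNReal.ofReal β ^ finrank ℝ E)⁻¹ O) :
    μ (ball y r) ≤ 2 * μ (ball y r \ O) := by
  set B := ENNReal.ofReal β ^ finrank ℝ E
  have hβ0 : 0 < β := one_pos.trans_le hβ
  have hB0 : B ≠ 0 := pow_ne_zero _ (ENNReal.ofReal_pos.2 hβ0).ne'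
  have hB : B ≠ ∞ := ENNReal.pow_ne_top ENNReal.ofReal_ne_top
  have hdensity : μ (O ∩ ball y (β * r)) / μ (ball y (β * r)) ≤ (2 * B)⁻¹ := by
    have h := (setLAverage_ball_le_maximalFunction hx).trans (not_lt.1 hxO)
    rwa [setLAverage_eq, lintegral_indicator_one hO, Measure.restrict_apply hO] at h
  have hinter : μ (ball y r ∩ O) ≤ μ (ball y r) / 2 :=
    calc μ (ball y r ∩ O) ≤ μ (O ∩ ball y (β * r)) := by
          rw [inter_comm]
          gcongr
          exact le_mul_of_one_le_left hr.le hβ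
      _ ≤ (2 * B)⁻¹ * (B * μ (ball y r)) := by
          rw [← measure_ball_mul y y hβ0]
          exact (ENNReal.div_le_iff (measure_ball_pos μ y (mul_pos hβ0 hr)).ne'
            measure_ball_lt_top.ne).1 hdensity
      _ = μ (ball y r) / 2 := by
          rw [ENNReal.mul_inv (.inl two_ne_zero) (.inl ENNReal.ofNat_ne_top), mul_assoc,
            ENNReal.inv_mul_cancel_left hB0 hB, ENNReal.div_eq_inv_mul]
  have hhalf : μ (ball y r) / 2 ≤ μ (ball y r \ O) := by
    refine (ENNReal.add_le_add_iff_left (a := μ (ball y r) / 2) ?_).1 ?_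
    · exact ENNReal.div_ne_top measure_ball_lt_top.ne two_ne_zero
    · rw [ENNReal.add_halves]
      exact (measure_inter_add_sdiff (ball y r) hO).ge.trans (add_le_add_left hinter _)
  rw [mul_comm]
  exact (ENNReal.div_le_iff two_ne_zero ENNReal.ofNat_ne_top).1 hhalf

lemma setLAverage_indicator_compl_halo_le (hO : MeasurableSet O) (hβ : 1 ≤ β) (hr : 0 < r) (y : E) :
    ⨍⁻ x in ball y (β * r),
        (halo μ (2 * ENNReal.ofReal β ^ finrank ℝ E)⁻¹ O)ᶜ.indicator 1 x ∂μ ≤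
      ⨍⁻ x in ball y r, 2 * Oᶜ.indicator 1 x ∂μ := by
  set N := halo μ (2 * ENNReal.ofReal β ^ finrank ℝ E)⁻¹ O
  have hN : MeasurableSet Nᶜ := measurableSet_halo.compl
  have hcompl : ∫⁻ x in ball y r, 2 * Oᶜ.indicator 1 x ∂μ = 2 * μ (ball y r \ O) := by
    rw [lintegral_const_mul _ (measurable_one.indicator hO.compl),
      lintegral_indicator_one hO.compl, Measure.restrict_apply hO.compl, inter_comm, sdiff_eq]
  rw [setLAverage_eq, setLAverage_eq, hcompl, lintegral_indicator_one hN,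
    Measure.restrict_apply hN]
  rcases (Nᶜ ∩ ball y (β * r)).eq_empty_or_nonempty with hempty | ⟨x, hxN, hx⟩
  · rw [hempty, measure_empty, ENNReal.zero_div]
    exact zero_le
  · calc μ (Nᶜ ∩ ball y (β * r)) / μ (ball y (β * r)) ≤ 1 :=
          ENNReal.div_le_of_le_mul (by rw [one_mul]; exact measure_mono inter_subset_right)
      _ ≤ 2 * μ (ball y r \ O) / μ (ball y r) := by
          rw [ENNReal.le_div_iff_mul_le (.inl (measure_ball_pos μ y hr).ne')
            (.inl measure_ball_lt_top.ne), one_mul]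
          exact measure_ball_le_two_mul_measure_diff hO hβ hr hx hxN

lemma setLIntegral_compl_halo_coneIntegral_le (hG : Measurable (uncurry G)) (hO : MeasurableSet O)
    (hβ : 1 ≤ β) :
    ∫⁻ x in (halo μ (2 * ENNReal.ofReal β ^ finrank ℝ E)⁻¹ O)ᶜ, coneIntegral μ ν β G x ∂μ ≤
      2 * ∫⁻ x in Oᶜ, coneIntegral μ ν 1 G x ∂μ := by
  have hmul (S : Set E) (u : E → ℝ≥0∞) (x : E) : u x * S.indicator 1 x = S.indicator u x := by
    simp only [← indicator_mul_right, Pi.one_apply, mul_one]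
  have hle := lintegral_coneIntegral_mul_mono (μ := μ) (ν := ν) hG
    (measurable_one.indicator measurableSet_halo.compl)
    ((measurable_one.indicator hO.compl).const_mul 2) (α := β) (β := 1) fun y t ht => by
      simpa only [one_mul] using setLAverage_indicator_compl_halo_le hO hβ ht y
  simp only [mul_left_comm _ (2 : ℝ≥0∞), hmul] at hle
  rwa [lintegral_indicator measurableSet_halo.compl,
    lintegral_const_mul _ ((measurable_coneIntegral hG 1).indicator hO.compl),
    lintegral_indicator hO.compl] at hle

lemma measure_lt_mul_coneIntegral_le (hG : Measurable (uncurry G)) (hβ : 1 ≤ β) {t : ℝ}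
    (ht : 0 < t) :
    μ {x | ENNReal.ofReal t < ENNReal.ofReal β ^ finrank ℝ E * coneIntegral μ ν β G x} ≤
      4 ^ finrank ℝ E * (2 * ENNReal.ofReal β ^ finrank ℝ E) *
          μ {x | ENNReal.ofReal t < coneIntegral μ ν 1 G x} +
        2 * ENNReal.ofReal β ^ finrank ℝ E * ((ENNReal.ofReal t)⁻¹ *
          ∫⁻ x in {x | coneIntegral μ ν 1 G x ≤ ENNReal.ofReal t}, coneIntegral μ ν 1 G x ∂μ) := by
  set B := ENNReal.ofReal β ^ finrank ℝ E
  set O := {x | ENNReal.ofReal t < coneIntegral μ ν 1 G x}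
  set N := halo μ (2 * B)⁻¹ O
  have hB0 : B ≠ 0 := pow_ne_zero _ (ENNReal.ofReal_pos.2 (one_pos.trans_le hβ)).ne'
  have hB : B ≠ ∞ := ENNReal.pow_ne_top ENNReal.ofReal_ne_top
  have hO : MeasurableSet O := measurableSet_lt measurable_const (measurable_coneIntegral hG 1)
  have hOc : Oᶜ = {x | coneIntegral μ ν 1 G x ≤ ENNReal.ofReal t} := by
    ext x
    simp only [O, mem_compl_iff, mem_ofPred_eq, not_lt]
  have hchebyshev : μ ({x | ENNReal.ofReal t < B * coneIntegral μ ν β G x} ∩ Nᶜ) ≤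
      (ENNReal.ofReal t)⁻¹ * ∫⁻ x in Nᶜ, B * coneIntegral μ ν β G x ∂μ := by
    rw [← Measure.restrict_apply' measurableSet_halo.compl, ← ENNReal.div_eq_inv_mul]
    exact (measure_mono fun x (hx : ENNReal.ofReal t < _) => hx.le).trans
      (meas_ge_le_lintegral_div ((measurable_coneIntegral hG β).const_mul B).aemeasurable
        (ENNReal.ofReal_pos.2 ht).ne' ENNReal.ofReal_ne_top)
  calc μ {x | ENNReal.ofReal t < B * coneIntegral μ ν β G x}
      ≤ μ N + μ ({x | ENNReal.ofReal t < B * coneIntegral μ ν β G x} ∩ Nᶜ) :=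
        (measure_mono fun x hx => or_iff_not_imp_left.2 fun hxN => ⟨hx, hxN⟩).trans
          (measure_union_le _ _)
    _ ≤ 4 ^ finrank ℝ E * (2 * B) * μ O +
          (ENNReal.ofReal t)⁻¹ * (B * (2 * ∫⁻ x in Oᶜ, coneIntegral μ ν 1 G x ∂μ)) := by
        refine add_le_add (measure_halo_inv_le hO (mul_ne_zero two_ne_zero hB0)
          (ENNReal.mul_ne_top ENNReal.ofNat_ne_top hB)) (hchebyshev.trans ?_)
        rw [lintegral_const_mul _ (measurable_coneIntegral hG β)]
        gcongr _ * (_ * ?_)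
        exact setLIntegral_compl_halo_coneIntegral_le hG hO hβ
    _ = _ := by
        rw [hOc]
        ring

lemma lintegral_coneIntegral_rpow_le_of_lt_one (hr : 0 < r) (hr1 : r < 1)
    (hG : Measurable (uncurry G)) (hβ : 1 ≤ β) :
    ∫⁻ x, coneIntegral μ ν β G x ^ r ∂μ ≤
      2 * (4 ^ finrank ℝ E + ENNReal.ofReal (r / (1 - r))) *
        (ENNReal.ofReal β ^ finrank ℝ E) ^ (1 - r) * ∫⁻ x, coneIntegral μ ν 1 G x ^ r ∂μ := by
  set B := ENNReal.ofReal β ^ finrank ℝ E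
  have hB0 : B ≠ 0 := pow_ne_zero _ (ENNReal.ofReal_pos.2 (one_pos.trans_le hβ)).ne'
  have hB : B ≠ ∞ := ENNReal.pow_ne_top ENNReal.ofReal_ne_top
  set c := ENNReal.ofReal (r / (1 - r))
  set I := ∫⁻ x, coneIntegral μ ν 1 G x ^ r ∂μ
  have hgoodLambda : ∫⁻ x, (B * coneIntegral μ ν β G x) ^ r ∂μ ≤
      (4 ^ finrank ℝ E * (2 * B) + 2 * B * c) * I :=
    lintegral_rpow_le_of_measure_lt_le hr hr1 ((measurable_coneIntegral hG β).const_mul B)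
      (measurable_coneIntegral hG 1) fun t ht => measure_lt_mul_coneIntegral_le hG hβ ht
  have hpow : B ^ r * B ^ (1 - r) = B := by
    rw [← ENNReal.rpow_add _ _ hB0 hB, add_sub_cancel, ENNReal.rpow_one]
  refine (ENNReal.mul_le_mul_iff_right (a := B ^ r) ?_ ?_).1 ?_
  · simp [ENNReal.rpow_eq_zero_iff, hB0, hB]
  · exact ENNReal.rpow_ne_top_of_nonneg hr.le hB
  calc B ^ r * ∫⁻ x, coneIntegral μ ν β G x ^ r ∂μ
      = ∫⁻ x, (B * coneIntegral μ ν β G x) ^ r ∂μ := by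
        simp_rw [ENNReal.mul_rpow_of_nonneg _ _ hr.le]
        rw [lintegral_const_mul _ ((measurable_coneIntegral hG β).pow_const r)]
    _ ≤ (4 ^ finrank ℝ E * (2 * B) + 2 * B * c) * I := hgoodLambda
    _ = B * (2 * (4 ^ finrank ℝ E + c) * I) := by ring
    _ = B ^ r * B ^ (1 - r) * (2 * (4 ^ finrank ℝ E + c) * I) := by rw [hpow]
    _ = B ^ r * (2 * (4 ^ finrank ℝ E + c) * B ^ (1 - r) * I) := by ring

lemma exists_lintegral_coneIntegral_rpow_le (μ : Measure E) [μ.IsAddHaarMeasure] (ν : Measure ℝ)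
    [SFinite ν] (hr : 0 < r) : ∃ K : ℝ≥0∞, K ≠ ∞ ∧ ∀ β : ℝ, 1 ≤ β → ∀ G : E → ℝ → ℝ≥0∞,
      Measurable (uncurry G) → ∫⁻ x, coneIntegral μ ν β G x ^ r ∂μ ≤
        K * (ENNReal.ofReal β ^ finrank ℝ E) ^ max 0 (1 - r) *
          ∫⁻ x, coneIntegral μ ν 1 G x ^ r ∂μ := by
  rcases lt_trichotomy r 1 with hr1 | rfl | hr1
  · refine ⟨2 * (4 ^ finrank ℝ E + ENNReal.ofReal (r / (1 - r))), by finiteness,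
      fun β hβ G hG => ?_⟩
    rw [max_eq_right (sub_nonneg.2 hr1.le)]
    exact lintegral_coneIntegral_rpow_le_of_lt_one hr hr1 hG hβ
  · refine ⟨1, ENNReal.one_ne_top, fun β hβ G hG => ?_⟩
    simp only [sub_self, max_self, ENNReal.rpow_zero, ENNReal.rpow_one, one_mul]
    exact (lintegral_coneIntegral_eq_coneIntegral_one hG (one_pos.trans_le hβ)).le
  · have hrs := Real.HolderConjugate.conjExponent hr1
    refine ⟨(ENNReal.ofReal (r.conjExponent / (r.conjExponent - 1)) *
      (2 ^ r.conjExponent * 4 ^ finrank ℝ E)) ^ (r / r.conjExponent), ?_, fun β hβ G hG => ?_⟩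
    · exact ENNReal.rpow_ne_top_of_nonneg (div_nonneg hr.le hrs.symm.nonneg) (by finiteness)
    · rw [max_eq_left (sub_nonpos.2 hr1.le), ENNReal.rpow_zero, mul_one]
      exact lintegral_coneIntegral_rpow_le_of_one_lt hrs hG hβ

end ConeIntegral

section AreaFunctional

open Module Set Function

/-- The Lusin area functional of aperture `β` and exponent `q`, for an arbitrary measure `ν` on the
scales `t > 0`. -/
noncomputable def areaFunctional {X : Type*} [PseudoMetricSpace X] [MeasurableSpace X]
    (μ : Measure X) (ν : Measure ℝ) (q β : ℝ) (F : X → ℝ → ℝ≥0∞) (x : X) : ℝ≥0∞ :=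
  coneIntegral μ ν β (fun y t => F y t ^ q) x ^ (1 / q)

lemma eLpNorm'_areaFunctional {X : Type*} [PseudoMetricSpace X] [MeasurableSpace X]
    {μ : Measure X} {ν : Measure ℝ} {p q β : ℝ} {F : X → ℝ → ℝ≥0∞} :
    eLpNorm' (areaFunctional μ ν q β F) p μ =
      (∫⁻ x, coneIntegral μ ν β (fun y t => F y t ^ q) x ^ (p / q) ∂μ) ^ (1 / p) := by
  simp only [eLpNorm', areaFunctional, enorm_eq_self, ← ENNReal.rpow_mul, one_div_mul_eq_div]

lemma one_div_min_sub_one_div {p q : ℝ} (hp : 0 < p) (hq : 0 < q) :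
    1 / min p q - 1 / q = max 0 (1 - p / q) * (1 / p) := by
  rcases le_total p q with hpq | hpq
  · rw [min_eq_left hpq, max_eq_right (sub_nonneg.2 ((div_le_one hq).2 hpq))]
    field_simp
  · rw [min_eq_right hpq, max_eq_left (sub_nonpos.2 ((one_le_div hq).2 hpq)), sub_self, zero_mul]

theorem Sbeta_Lp_bound_general {E : Type*} [NormedAddCommGroup E] [NormedSpace ℝ E]
    [FiniteDimensional ℝ E] [MeasurableSpace E] [BorelSpace E] (μ : Measure E)
    [μ.IsAddHaarMeasure] (ν : Measure ℝ) [SFinite ν] {p q : ℝ} (hp : 0 < p) (hq : 0 < q) :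
    ∃ C : ℝ, 0 < C ∧ ∀ β : ℝ, 1 ≤ β → ∀ F : E → ℝ → ℝ≥0∞, Measurable (uncurry F) →
      eLpNorm' (areaFunctional μ ν q β F) p μ ≤
        ENNReal.ofReal (C * β ^ ((finrank ℝ E : ℝ) * (1 / min p q - 1 / q))) *
          eLpNorm' (areaFunctional μ ν q 1 F) p μ := by
  obtain ⟨K, hK, hcone⟩ := exists_lintegral_coneIntegral_rpow_le μ ν (div_pos hp hq)
  have hKp : K ^ (1 / p) ≠ ∞ := ENNReal.rpow_ne_top_of_nonneg (by positivity) hK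
  refine ⟨(K ^ (1 / p)).toReal + 1, by positivity, fun β hβ F hF => ?_⟩
  have hβ0 : 0 < β := one_pos.trans_le hβ
  have hKC : K ^ (1 / p) ≤ ENNReal.ofReal ((K ^ (1 / p)).toReal + 1) :=
    (ENNReal.le_ofReal_iff_toReal_le hKp (by positivity)).2 (by linarith)
  have hexp : ((ENNReal.ofReal β ^ finrank ℝ E) ^ max 0 (1 - p / q)) ^ (1 / p) =
      ENNReal.ofReal (β ^ ((finrank ℝ E : ℝ) * (1 / min p q - 1 / q))) := by
    rw [one_div_min_sub_one_div hp hq, ← ENNReal.ofReal_rpow_of_pos hβ0, ENNReal.rpow_mul,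
      ENNReal.rpow_natCast, ENNReal.rpow_mul]
  rw [eLpNorm'_areaFunctional, eLpNorm'_areaFunctional, ENNReal.ofReal_mul (by positivity), ← hexp]
  refine (ENNReal.rpow_le_rpow
    (hcone β hβ (fun y t => F y t ^ q) (hF.pow_const q)) (by positivity)).trans ?_
  rw [ENNReal.mul_rpow_of_nonneg _ _ (by positivity),
    ENNReal.mul_rpow_of_nonneg _ _ (by positivity)]
  gcongr

/-- The measure `dt / t` on the scales `0 < t < 1`. Its negative part is irrelevant, as
`areaFunctional` only sees positive scales. -/
noncomputable def scaleMeasure : Measure ℝ :=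
  (volume.restrict (Iio 1)).withDensity fun t => ENNReal.ofReal t⁻¹

instance : SFinite scaleMeasure := by
  unfold scaleMeasure
  infer_instance

lemma SFn_eq_areaFunctional (n : ℕ) (q β : ℝ) (F : EuclideanSpace ℝ (Fin n) → ℝ → ℝ≥0∞) :
    SFn n q β F = areaFunctional volume scaleMeasure q β F := by
  ext x
  rw [SFn, areaFunctional, coneIntegral, scaleMeasure, restrict_withDensity measurableSet_Ioi,
    Measure.restrict_restrict measurableSet_Ioi, Ioi_inter_Iio,
    lintegral_withDensity_eq_lintegral_mul_non_measurable _ (by fun_prop)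
      (.of_forall fun _ => ENNReal.ofReal_lt_top)]
  simp only [Pi.mul_apply, mul_comm]

lemma Np_eq_eLpNorm' (n : ℕ) (p : ℝ) (h : EuclideanSpace ℝ (Fin n) → ℝ≥0∞) :
    Np n p h = eLpNorm' h p volume := by
  simp only [Np, eLpNorm', enorm_eq_self]

end AreaFunctional

/-- `‖S_β(F)‖_{L^p} ≤ C β^{n(1/min(p,q) − 1/q)} ‖S(F)‖_{L^p}` with `C`
independent of `β` and `F`. -/
theorem Sbeta_Lp_bound (n : ℕ) (p q : ℝ) (hp : 1 < p) (hq : 1 < q) :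
    ∃ C : ℝ, 0 < C ∧ ∀ β : ℝ, 1 < β → ∀ F : EuclideanSpace ℝ (Fin n) → ℝ → ℝ≥0∞,
      Measurable (Function.uncurry F) →
      Np n p (SFn n q β F) ≤
        ENNReal.ofReal (C * β ^ ((n : ℝ) * (1 / min p q - 1 / q))) * Np n p (SFn n q 1 F) := by
  obtain ⟨C, hC, hbound⟩ := Sbeta_Lp_bound_general
    (volume : Measure (EuclideanSpace ℝ (Fin n))) scaleMeasure (one_pos.trans hp) (one_pos.trans hq)
  refine ⟨C, hC, fun β hβ F hF => ?_⟩
  simpa only [SFn_eq_areaFunctional, Np_eq_eLpNorm', finrank_euclideanSpace_fin] using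
    hbound β hβ.le F hF
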